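/- arXiv:2212.05125 — 4 statements merged into one kernel-verified Lean document; each statement's English description precedes it below -/
import Mathlib

section
/- Let X and Y be standard Borel spaces, e : Y → X a measurable map, μ a probability measure on X, and κ, η two Markov kernels from X to Y such that for μ-almost every x ∈ X the measures κ(x) and η(x) give full mass to the fiber e⁻¹({x}), i.e. κ(x)(e⁻¹({x})) = η(x)(e⁻¹({x})) = 1. Then the Kullback–Leibler divergence satisfies KL(μ.bind κ ‖ μ.bind η) = ∫_X KL(κ(x) ‖ η(x)) dμ(x), as an identity in [0, ∞]. -/
open MeasureTheory ProbabilityTheory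
open scoped ENNReal

open Classical in
/-- Kullback–Leibler divergence of two measures, valued in `[0, ∞]`:
`∫ log (dP/dQ) dP` when `P ≪ Q` and the log-likelihood ratio is integrable,
and `∞` otherwise. -/
noncomputable def klDiv {α : Type*} [MeasurableSpace α] (P Q : Measure α) : ℝ≥0∞ :=
  if P ≪ Q ∧ Integrable (llr P Q) P then ENNReal.ofReal (∫ x, llr P Q x ∂P) else ⊤

/-- For probability measures, `klDiv` is the `klFun`-divergence. -/
lemma klDiv_eq_lintegral_klFun_aux {α : Type*} [MeasurableSpace α] (P Q : Measure α)
    [IsProbabilityMeasure P] [IsProbabilityMeasure Q] [Decidable (P ≪ Q)] :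
    klDiv P Q = if P ≪ Q then
      ∫⁻ x, ENNReal.ofReal (InformationTheory.klFun (P.rnDeriv Q x).toReal) ∂Q else ⊤ := by
  have h1 : klDiv P Q = InformationTheory.klDiv P Q := by
    rw [InformationTheory.klDiv_def, klDiv]
    simp
  rw [h1, InformationTheory.klDiv_eq_lintegral_klFun]
  congr

/-- For Markov kernels `κ, η` from `X` to `Y` that (μ-a.e.) give full mass to the fiber
of the measurable map `e : Y → X`, the KL divergence of the mixtures equals the
μ-average of the KL divergences of the kernels. -/
theorem klDiv_bind_eq_integral_klDiv
    {X Y : Type*} [MeasurableSpace X] [StandardBorelSpace X]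
    [MeasurableSpace Y] [StandardBorelSpace Y]
    (e : Y → X) (he : Measurable e)
    (μ : Measure X) [IsProbabilityMeasure μ]
    (κ η : Kernel X Y) [IsMarkovKernel κ] [IsMarkovKernel η]
    (hfib : ∀ᵐ x ∂μ, κ x (e ⁻¹' {x}) = 1 ∧ η x (e ⁻¹' {x}) = 1) :
    klDiv (μ.bind κ) (μ.bind η) = ∫⁻ x, klDiv (κ x) (η x) ∂μ := by
  classical
  have hκ : ∀ᵐ x ∂μ, ∀ᵐ y ∂κ x, e y = x := by
    filter_upwards [hfib] with x hx
    exact (mem_ae_iff_prob_eq_one (he (measurableSet_singleton x))).2 hx.1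
  have hη : ∀ᵐ x ∂μ, ∀ᵐ y ∂η x, e y = x := by
    filter_upwards [hfib] with x hx
    exact (mem_ae_iff_prob_eq_one (he (measurableSet_singleton x))).2 hx.2
  have hg : Measurable (fun y : Y => (e y, y)) := he.prodMk measurable_id
  -- absolute continuity of the mixtures forces that of the kernels
  have hac : μ.bind κ ≪ μ.bind η → ∀ᵐ x ∂μ, κ x ≪ η x := by
    intro h
    set S : Set Y := (fun y : Y => (e y, y)) ⁻¹' (Kernel.mutuallySingularSet κ η) with hS
    have hSm : MeasurableSet S := hg (Kernel.measurableSet_mutuallySingularSet κ η)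
    have hslice : ∀ (ν : Measure Y) (x : X), (∀ᵐ y ∂ν, e y = x) →
        ν S = ν (Kernel.mutuallySingularSetSlice κ η x) := by
      intro ν x hν
      refine measure_congr ?_
      filter_upwards [hν] with y hy
      apply propext
      change (e y, y) ∈ Kernel.mutuallySingularSet κ η ↔ _
      rw [hy]
      rfl
    have hQ : (μ.bind η) S = 0 := by
      rw [Measure.bind_apply hSm η.measurable.aemeasurable, lintegral_eq_zero_iff
        (η.measurable_coe hSm)]
      filter_upwards [hη] with x hx
      rw [hslice _ x hx]
      exact Kernel.measure_mutuallySingularSetSlice κ η x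
    have hP := h hQ
    rw [Measure.bind_apply hSm κ.measurable.aemeasurable, lintegral_eq_zero_iff
        (κ.measurable_coe hSm)] at hP
    filter_upwards [hκ, hP] with x hx hx'
    rw [← Kernel.singularPart_eq_zero_iff_absolutelyContinuous,
      Kernel.singularPart_eq_zero_iff_measure_eq_zero, ← hslice _ x hx]
    exact hx'
  by_cases hall : ∀ᵐ x ∂μ, κ x ≪ η x
  · set f : Y → ℝ≥0∞ := fun y => Kernel.rnDeriv κ η (e y) y with hf
    have hfm : Measurable f := (Kernel.measurable_rnDeriv κ η).comp hg
    have hfx : ∀ᵐ x ∂μ, f =ᵐ[η x] (κ x).rnDeriv (η x) := by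
      filter_upwards [hη] with x hx
      filter_upwards [hx, Kernel.rnDeriv_eq_rnDeriv_measure (κ := κ) (η := η) (a := x)] with y hy hy'
      rw [← hy', hf]
      simp only [hy]
    have hwd : μ.bind κ = (μ.bind η).withDensity f := by
      ext A hA
      rw [withDensity_apply _ hA, ← lintegral_indicator hA,
        Measure.lintegral_bind η.measurable.aemeasurable (hfm.indicator hA).aemeasurable,
        Measure.bind_apply hA κ.measurable.aemeasurable]
      refine lintegral_congr_ae ?_
      filter_upwards [hfx, hall] with x hx hx'
      rw [lintegral_indicator hA, lintegral_congr_ae (ae_restrict_of_ae hx),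
        Measure.setLIntegral_rnDeriv hx']
    have hPQ : μ.bind κ ≪ μ.bind η := by
      rw [hwd]; exact withDensity_absolutelyContinuous _ _
    have hrn : (μ.bind κ).rnDeriv (μ.bind η) =ᵐ[μ.bind η] f := by
      rw [hwd]; exact Measure.rnDeriv_withDensity _ hfm
    rw [klDiv_eq_lintegral_klFun_aux, if_pos hPQ]
    have h2 : ∫⁻ y, ENNReal.ofReal
          (InformationTheory.klFun ((μ.bind κ).rnDeriv (μ.bind η) y).toReal) ∂(μ.bind η)
        = ∫⁻ y, ENNReal.ofReal (InformationTheory.klFun (f y).toReal) ∂(μ.bind η) := by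
      refine lintegral_congr_ae ?_
      filter_upwards [hrn] with y hy
      rw [hy]
    rw [h2, Measure.lintegral_bind η.measurable.aemeasurable
      (Measurable.aemeasurable (by fun_prop))]
    refine lintegral_congr_ae ?_
    filter_upwards [hfx, hall] with x hx hx'
    rw [klDiv_eq_lintegral_klFun_aux, if_pos hx']
    refine lintegral_congr_ae ?_
    filter_upwards [hx] with y hy
    rw [hy]
  · rw [klDiv, if_neg (fun h => hall (hac h.1))]
    symm
    have hm : MeasurableSet {x | κ x ≪ η x}ᶜ :=
      (Kernel.measurableSet_absolutelyContinuous κ η).compl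
    have hpos : μ {x | κ x ≪ η x}ᶜ ≠ 0 := fun h => hall (mem_ae_iff.2 h)
    rw [eq_top_iff]
    calc (⊤ : ℝ≥0∞) = ∫⁻ x in {x | κ x ≪ η x}ᶜ, ⊤ ∂μ := by
          rw [setLIntegral_const, ENNReal.top_mul hpos]
      _ ≤ ∫⁻ x in {x | κ x ≪ η x}ᶜ, klDiv (κ x) (η x) ∂μ := by
          refine setLIntegral_mono' hm ?_
          intro x hx
          rw [klDiv, if_neg (fun h => hx h.1)]
      _ ≤ ∫⁻ x, klDiv (κ x) (η x) ∂μ := setLIntegral_le_lintegral _ _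
end

section
/- Let d ≥ 1, let b : ℝ^d → ℝ^d be continuously differentiable, D : ℝ^d → ℝ^{d×d} twice continuously differentiable with D(x) symmetric for all x, and ρ : ℝ^d → ℝ twice continuously differentiable with ρ(x) > 0 for all x, satisfying the stationary Fokker–Planck equation Σ_{i=1}^d ∂_i(b_i ρ)(x) = Σ_{i,j=1}^d ∂_i∂_j(D_{ij} ρ)(x) for all x ∈ ℝ^d. Then for all smooth compactly supported f, g : ℝ^d → ℝ, ∫ f(x)·(⟨b(x), ∇g(x)⟩ + Σ_{i,j} D_{ij}(x) ∂_i∂_j g(x))·ρ(x) dx = ∫ g(x)·(−⟨b(x), ∇f(x)⟩ + 2ρ(x)⁻¹⟨∇·(Dρ)(x), ∇f(x)⟩ + Σ_{i,j} D_{ij}(x) ∂_i∂_j f(x))·ρ(x) dx, where (∇·(Dρ))_i := Σ_j ∂_j(D_{ij} ρ). -/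
open MeasureTheory

/-- The `i`-th partial derivative of `f : (ι → ℝ) → ℝ` at `x`. -/
noncomputable def pd {ι : Type*} [Fintype ι] [DecidableEq ι] (i : ι)
    (f : (ι → ℝ) → ℝ) (x : ι → ℝ) : ℝ :=
  fderiv ℝ f x (Pi.single i 1)

section helpers

variable {ι : Type*} [Fintype ι] [DecidableEq ι]

lemma pd_add' {i : ι} {u v : (ι → ℝ) → ℝ} (x : ι → ℝ) (hu : ContDiff ℝ 1 u)
    (hv : ContDiff ℝ 1 v) : pd i (fun y => u y + v y) x = pd i u x + pd i v x := by
  have h1 := (hu.differentiable one_ne_zero) x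
  have h2 := (hv.differentiable one_ne_zero) x
  simp only [pd]
  rw [fderiv_fun_add h1 h2]
  rfl

lemma pd_sub' {i : ι} {u v : (ι → ℝ) → ℝ} (x : ι → ℝ) (hu : ContDiff ℝ 1 u)
    (hv : ContDiff ℝ 1 v) : pd i (fun y => u y - v y) x = pd i u x - pd i v x := by
  have h1 := (hu.differentiable one_ne_zero) x
  have h2 := (hv.differentiable one_ne_zero) x
  simp only [pd]
  rw [fderiv_fun_sub h1 h2]
  rfl

lemma pd_mul' {i : ι} {u v : (ι → ℝ) → ℝ} (x : ι → ℝ) (hu : ContDiff ℝ 1 u)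
    (hv : ContDiff ℝ 1 v) :
    pd i (fun y => u y * v y) x = pd i u x * v x + u x * pd i v x := by
  have h1 := (hu.differentiable one_ne_zero) x
  have h2 := (hv.differentiable one_ne_zero) x
  simp only [pd]
  rw [fderiv_fun_mul h1 h2]
  simp
  ring

lemma pd_contDiff {i : ι} {u : (ι → ℝ) → ℝ} (hu : ContDiff ℝ 2 u) : ContDiff ℝ 1 (pd i u) := by
  have : ContDiff ℝ 1 (fderiv ℝ u) := hu.fderiv_right (by norm_num)
  exact this.clm_apply contDiff_const

lemma pd_continuous {i : ι} {u : (ι → ℝ) → ℝ} (hu : ContDiff ℝ 1 u) : Continuous (pd i u) := by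
  have : Continuous (fderiv ℝ u) := hu.continuous_fderiv one_ne_zero
  exact this.clm_apply continuous_const

lemma pd_integrable {i : ι} {u : (ι → ℝ) → ℝ} (hu : ContDiff ℝ 1 u) (hc : HasCompactSupport u) :
    Integrable (pd i u) :=
  (pd_continuous hu).integrable_of_hasCompactSupport (hc.fderiv_apply (𝕜 := ℝ) _)

lemma pd_integral {i : ι} {u : (ι → ℝ) → ℝ} (hu : ContDiff ℝ 1 u) (hc : HasCompactSupport u) :
    ∫ x, pd i u x = 0 := by
  have h := integral_mul_fderiv_eq_neg_fderiv_mul_of_integrable (𝕜 := ℝ)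
    (μ := (volume : Measure (ι → ℝ)))
    (f := fun _ => (1 : ℝ)) (g := u) (v := Pi.single i 1) (by simp)
    (by simp only [one_mul]; exact pd_integrable (i := i) hu hc)
    (by simpa using hu.continuous.integrable_of_hasCompactSupport hc)
    (fun x _ => differentiableAt_const _) (fun x _ => hu.differentiable one_ne_zero x)
  simpa [pd] using h

end helpers

/-- **The generator of the time-reversed diffusion is the adjoint of the generator.**
If `ρ > 0` satisfies the stationary Fokker–Planck equation for the diffusion with drift
`b` and diffusion matrix `D`, then for all test functions `f, g`,
`∫ f (L g) ρ = ∫ g (L̄ f) ρ`, where `L g = ⟨b, ∇g⟩ + Σ D_{ij} ∂_i ∂_j g` and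
`L̄ f = -⟨b, ∇f⟩ + 2 ρ⁻¹ ⟨∇·(Dρ), ∇f⟩ + Σ D_{ij} ∂_i ∂_j f`. -/
theorem time_reversed_generator_is_adjoint (d : ℕ) (hd : 1 ≤ d)
    (b : (Fin d → ℝ) → (Fin d → ℝ))
    (hb : ∀ i, ContDiff ℝ 1 (fun x => b x i))
    (D : (Fin d → ℝ) → Matrix (Fin d) (Fin d) ℝ)
    (hD : ∀ i j, ContDiff ℝ 2 (fun x => D x i j))
    (hDsymm : ∀ x, (D x).IsSymm)
    (ρ : (Fin d → ℝ) → ℝ) (hρ : ContDiff ℝ 2 ρ) (hρpos : ∀ x, 0 < ρ x)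
    (hFP : ∀ x, ∑ i, pd i (fun y => b y i * ρ y) x
      = ∑ i, ∑ j, pd i (pd j (fun z => D z i j * ρ z)) x)
    (f g : (Fin d → ℝ) → ℝ)
    (hf : ContDiff ℝ (⊤ : ℕ∞) f) (hfc : HasCompactSupport f)
    (hg : ContDiff ℝ (⊤ : ℕ∞) g) (hgc : HasCompactSupport g) :
    ∫ x, f x * ((∑ i, b x i * pd i g x) + ∑ i, ∑ j, D x i j * pd i (pd j g) x) * ρ x
      = ∫ x, g x * (-(∑ i, b x i * pd i f x)
          + 2 * (ρ x)⁻¹ * (∑ i, (∑ j, pd j (fun y => D y i j * ρ y) x) * pd i f x)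
          + ∑ i, ∑ j, D x i j * pd i (pd j f) x) * ρ x := by
  have hf2 : ContDiff ℝ 2 f := hf.of_le (WithTop.coe_le_coe.2 (le_top : (2 : ℕ∞) ≤ ⊤))
  have hg2 : ContDiff ℝ 2 g := hg.of_le (WithTop.coe_le_coe.2 (le_top : (2 : ℕ∞) ≤ ⊤))
  have hf1 : ContDiff ℝ 1 f := hf2.of_le (by norm_num)
  have hg1 : ContDiff ℝ 1 g := hg2.of_le (by norm_num)
  have hρ1 : ContDiff ℝ 1 ρ := hρ.of_le (by norm_num)
  obtain ⟨A, hAdef⟩ : ∃ A : Fin d → Fin d → (Fin d → ℝ) → ℝ,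
      ∀ i j, (fun z => D z i j * ρ z) = A i j := ⟨_, fun _ _ => rfl⟩
  obtain ⟨β, hβdef⟩ : ∃ β : Fin d → (Fin d → ℝ) → ℝ,
      ∀ i, (fun z => b z i * ρ z) = β i := ⟨_, fun _ => rfl⟩
  have hAx : ∀ i j x, A i j x = D x i j * ρ x := fun i j x => by rw [← hAdef]
  have hβx : ∀ i x, β i x = b x i * ρ x := fun i x => by rw [← hβdef]
  have hA2 : ∀ i j, ContDiff ℝ 2 (A i j) := fun i j => by
    rw [← hAdef]; exact (hD i j).mul hρ
  have hA1 : ∀ i j, ContDiff ℝ 1 (A i j) := fun i j => (hA2 i j).of_le (by norm_num)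
  have hβ1 : ∀ i, ContDiff ℝ 1 (β i) := fun i => by
    rw [← hβdef]; exact (hb i).mul hρ1
  have hAs : ∀ i j, A i j = A j i := fun i j => by
    ext x; rw [hAx, hAx, (hDsymm x).apply]
  simp only [hAdef, hβdef] at hFP ⊢
  have hpf : ∀ j, ContDiff ℝ 1 (pd j f) := fun j => pd_contDiff hf2
  have hpg : ∀ j, ContDiff ℝ 1 (pd j g) := fun j => pd_contDiff hg2
  have hpA : ∀ i j k, ContDiff ℝ 1 (pd k (A i j)) := fun i j k => pd_contDiff (hA2 i j)
  let U : Fin d → (Fin d → ℝ) → ℝ := fun i y => f y * (g y * β i y)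
  let V : Fin d → Fin d → (Fin d → ℝ) → ℝ := fun i j y =>
    f y * (A i j y * pd j g y) - g y * (A i j y * pd j f y) - f y * (g y * pd j (A i j) y)
  have hU1 : ∀ i, ContDiff ℝ 1 (U i) := fun i => hf1.mul (hg1.mul (hβ1 i))
  have hV1 : ∀ i j, ContDiff ℝ 1 (V i j) := fun i j =>
    ((hf1.mul ((hA1 i j).mul (hpg j))).sub (hg1.mul ((hA1 i j).mul (hpf j)))).sub
      (hf1.mul (hg1.mul (hpA i j j)))
  have hUc : ∀ i, HasCompactSupport (U i) := fun i => hfc.mul_right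
  have hVc : ∀ i j, HasCompactSupport (V i j) := fun i j =>
    ((HasCompactSupport.mul_right hfc).sub (HasCompactSupport.mul_right hgc)).sub
      (HasCompactSupport.mul_right hfc)
  have hdU : ∀ i x, pd i (U i) x
      = pd i f x * (g x * β i x) + f x * (pd i g x * β i x + g x * pd i (β i) x) := by
    intro i x
    rw [pd_mul' x hf1 (hg1.mul (hβ1 i)), pd_mul' x hg1 (hβ1 i)]
  have hdV : ∀ i j x, pd i (V i j) x
      = (pd i f x * (A i j x * pd j g x)
          + f x * (pd i (A i j) x * pd j g x + A i j x * pd i (pd j g) x))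
        - (pd i g x * (A i j x * pd j f x)
          + g x * (pd i (A i j) x * pd j f x + A i j x * pd i (pd j f) x))
        - (pd i f x * (g x * pd j (A i j) x)
          + f x * (pd i g x * pd j (A i j) x + g x * pd i (pd j (A i j)) x)) := by
    intro i j x
    rw [pd_sub' x ((hf1.mul ((hA1 i j).mul (hpg j))).sub (hg1.mul ((hA1 i j).mul (hpf j))))
        (hf1.mul (hg1.mul (hpA i j j))),
      pd_sub' x (hf1.mul ((hA1 i j).mul (hpg j))) (hg1.mul ((hA1 i j).mul (hpf j))),
      pd_mul' x hf1 ((hA1 i j).mul (hpg j)), pd_mul' x (hA1 i j) (hpg j),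
      pd_mul' x hg1 ((hA1 i j).mul (hpf j)), pd_mul' x (hA1 i j) (hpf j),
      pd_mul' x hf1 (hg1.mul (hpA i j j)), pd_mul' x hg1 (hpA i j j)]
  have hpt : ∀ x, f x * ((∑ i, b x i * pd i g x) + ∑ i, ∑ j, D x i j * pd i (pd j g) x) * ρ x
      = g x * (-(∑ i, b x i * pd i f x)
          + 2 * (ρ x)⁻¹ * (∑ i, (∑ j, pd j (A i j) x) * pd i f x)
          + ∑ i, ∑ j, D x i j * pd i (pd j f) x) * ρ x
        + ((∑ i, pd i (U i) x) + ∑ i, ∑ j, pd i (V i j) x) := by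
    intro x
    have hρ0 : ρ x ≠ 0 := (hρpos x).ne'
    have e1 : f x * ((∑ i, b x i * pd i g x) + ∑ i, ∑ j, D x i j * pd i (pd j g) x) * ρ x
        = (∑ i, f x * β i x * pd i g x) + ∑ i, ∑ j, f x * A i j x * pd i (pd j g) x := by
      simp only [hAx, hβx, mul_add, add_mul, Finset.mul_sum, Finset.sum_mul]
      congr 1
      · exact Finset.sum_congr rfl fun i _ => by ring
      · exact Finset.sum_congr rfl fun i _ => Finset.sum_congr rfl fun j _ => by ring
    have e2 : g x * (-(∑ i, b x i * pd i f x)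
          + 2 * (ρ x)⁻¹ * (∑ i, (∑ j, pd j (A i j) x) * pd i f x)
          + ∑ i, ∑ j, D x i j * pd i (pd j f) x) * ρ x
        = -(∑ i, g x * β i x * pd i f x) + (∑ i, ∑ j, 2 * g x * pd j (A i j) x * pd i f x)
          + ∑ i, ∑ j, g x * A i j x * pd i (pd j f) x := by
      simp only [hAx, hβx, mul_add, add_mul, Finset.mul_sum, Finset.sum_mul, mul_neg, neg_mul]
      congr 1
      · congr 1
        · congr 1
          exact Finset.sum_congr rfl fun i _ => by ring
        · exact Finset.sum_congr rfl fun i _ => Finset.sum_congr rfl fun j _ => by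
            field_simp
      · exact Finset.sum_congr rfl fun i _ => Finset.sum_congr rfl fun j _ => by ring
    have e3 : ∑ i, pd i (U i) x = (∑ i, g x * β i x * pd i f x) + (∑ i, f x * β i x * pd i g x)
        + f x * g x * ∑ i, pd i (β i) x := by
      rw [Finset.mul_sum, ← Finset.sum_add_distrib, ← Finset.sum_add_distrib]
      exact Finset.sum_congr rfl fun i _ => by rw [hdU]; ring
    let T : Fin d → Fin d → ℝ := fun i j => pd i f x * A i j x * pd j g x
      + f x * pd i (A i j) x * pd j g x - g x * pd i (A i j) x * pd j f x
    have e4 : ∑ i, ∑ j, pd i (V i j) x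
        = (∑ i, ∑ j, f x * A i j x * pd i (pd j g) x)
          - (∑ i, ∑ j, g x * A i j x * pd i (pd j f) x)
          - (∑ i, ∑ j, 2 * g x * pd j (A i j) x * pd i f x)
          - f x * g x * (∑ i, ∑ j, pd i (pd j (A i j)) x)
          + ((∑ i, ∑ j, T i j) - ∑ i, ∑ j, T j i) := by
      simp only [Finset.mul_sum, ← Finset.sum_add_distrib, ← Finset.sum_sub_distrib]
      refine Finset.sum_congr rfl fun i _ => Finset.sum_congr rfl fun j _ => ?_
      simp only [T]
      rw [hdV, hAs j i]
      ring
    have e5 : ∑ i, ∑ j, T i j = ∑ i, ∑ j, T j i := Finset.sum_comm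
    rw [e1, e2, e3, e4, e5, hFP x]
    ring
  have hG : Integrable (fun x => g x * (-(∑ i, b x i * pd i f x)
          + 2 * (ρ x)⁻¹ * (∑ i, (∑ j, pd j (A i j) x) * pd i f x)
          + ∑ i, ∑ j, D x i j * pd i (pd j f) x) * ρ x) := by
    have c1 : ∀ i, Continuous (fun x => b x i) := fun i => (hb i).continuous
    have c2 : ∀ i j, Continuous (fun x => D x i j) := fun i j => (hD i j).continuous
    have c3 : Continuous (fun x => (ρ x)⁻¹) := hρ.continuous.inv₀ fun x => (hρpos x).ne'
    have c4 : ∀ i, Continuous (pd i f) := fun i => (hpf i).continuous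
    have c5 : ∀ i j, Continuous (pd i (pd j f)) := fun i j => pd_continuous (hpf j)
    have c6 : ∀ i j k, Continuous (pd k (A i j)) := fun i j k => (hpA i j k).continuous
    have c7 := hρ.continuous
    have c8 := hg.continuous
    refine Continuous.integrable_of_hasCompactSupport (by fun_prop) ?_
    exact HasCompactSupport.mul_right (HasCompactSupport.mul_right hgc)
  have iU : ∀ i, Integrable (pd i (U i)) := fun i => pd_integrable (hU1 i) (hUc i)
  have iV : ∀ i j, Integrable (pd i (V i j)) := fun i j => pd_integrable (hV1 i j) (hVc i j)
  have iSU : Integrable (fun x => ∑ i, pd i (U i) x) := integrable_finsetSum _ fun i _ => iU i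
  have iSV1 : ∀ i, Integrable (fun x => ∑ j, pd i (V i j) x) := fun i =>
    integrable_finsetSum _ fun j _ => iV i j
  have iSV : Integrable (fun x => ∑ i, ∑ j, pd i (V i j) x) :=
    integrable_finsetSum _ fun i _ => iSV1 i
  have iS : Integrable (fun x => (∑ i, pd i (U i) x) + ∑ i, ∑ j, pd i (V i j) x) := iSU.add iSV
  rw [integral_congr_ae (Filter.Eventually.of_forall hpt), integral_add hG iS,
    integral_add iSU iSV, integral_finsetSum _ (fun i _ => iU i),
    integral_finsetSum _ (fun i _ => iSV1 i)]
  have z1 : ∀ i, ∫ x, pd i (U i) x = 0 := fun i => pd_integral (hU1 i) (hUc i)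
  have z2 : ∀ i, ∫ x, ∑ j, pd i (V i j) x = 0 := fun i => by
    rw [integral_finsetSum _ (fun j _ => iV i j)]
    exact Finset.sum_eq_zero fun j _ => pd_integral (hV1 i j) (hVc i j)
  simp only [z1, z2, Finset.sum_const_zero, add_zero]
end

section
/- Let d ≥ 1, let ρ, ρ₁ : ℝ^d → ℝ be continuously differentiable with ρ(x) > 0 and ρ₁(x) > 0 for all x, and let b_irr : ℝ^d → ℝ^d be continuously differentiable, compactly supported, and satisfy ∇·(b_irr ρ)(x) = 0 for all x ∈ ℝ^d. Then ∫ (log(ρ₁(x)/ρ(x)) + 1) · ∇·(b_irr ρ₁)(x) dx = 0. -/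
open MeasureTheory

lemma integral_pd_zero {d : ℕ} (i : Fin d) (f : (Fin d → ℝ) → ℝ) (hf : ContDiff ℝ 1 f)
    (hc : HasCompactSupport f) : Integrable (pd i f) ∧ ∫ x, pd i f x = 0 := by
  have hcont : Continuous (pd i f) :=
    (hf.continuous_fderiv one_ne_zero).clm_apply continuous_const
  have hcs : HasCompactSupport (pd i f) := hc.fderiv_apply ℝ (Pi.single i 1)
  have hint : Integrable (pd i f) := hcont.integrable_of_hasCompactSupport hcs
  refine ⟨hint, ?_⟩
  have h := integral_mul_fderiv_eq_neg_fderiv_mul_of_integrable (𝕜 := ℝ)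
    (μ := (volume : Measure (Fin d → ℝ)))
    (f := fun _ => (1 : ℝ)) (g := f) (v := Pi.single i 1)
    (by simp) (by simp only [one_mul]; exact hint)
    (by simpa using hf.continuous.integrable_of_hasCompactSupport hc)
    (fun x _ => by fun_prop) (fun x _ => (hf.differentiable one_ne_zero) x)
  simpa [pd] using h

lemma pd_mul {d : ℕ} (i : Fin d) (f g : (Fin d → ℝ) → ℝ) (x : Fin d → ℝ)
    (hf : DifferentiableAt ℝ f x) (hg : DifferentiableAt ℝ g x) :
    pd i (fun y => f y * g y) x = f x * pd i g x + g x * pd i f x := by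
  unfold pd
  rw [fderiv_fun_mul hf hg]
  simp

/-- **Orthogonality relation in the GENERIC decomposition of the Fokker–Planck
equation.** If the compactly supported `C¹` vector field `b_irr` satisfies
`∇·(b_irr ρ) = 0` for the positive `C¹` density `ρ`, then for any positive `C¹`
density `ρ₁`, `∫ (log(ρ₁/ρ) + 1) ∇·(b_irr ρ₁) dx = 0`. -/
theorem generic_orthogonality (d : ℕ) (hd : 1 ≤ d)
    (ρ ρ₁ : (Fin d → ℝ) → ℝ)
    (hρ : ContDiff ℝ 1 ρ) (hρpos : ∀ x, 0 < ρ x)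
    (hρ₁ : ContDiff ℝ 1 ρ₁) (hρ₁pos : ∀ x, 0 < ρ₁ x)
    (birr : (Fin d → ℝ) → (Fin d → ℝ))
    (hbirr : ∀ i, ContDiff ℝ 1 (fun x => birr x i))
    (hbc : HasCompactSupport birr)
    (hdiv : ∀ x, ∑ i, pd i (fun y => birr y i * ρ y) x = 0) :
    ∫ x, (Real.log (ρ₁ x / ρ x) + 1) * (∑ i, pd i (fun y => birr y i * ρ₁ y) x) = 0 := by
  have hr : ContDiff ℝ 1 (fun x => ρ₁ x / ρ x) := hρ₁.div hρ fun x => (hρpos x).ne'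
  have hrpos : ∀ x, 0 < ρ₁ x / ρ x := fun x => div_pos (hρ₁pos x) (hρpos x)
  have hL : ContDiff ℝ 1 (fun x => Real.log (ρ₁ x / ρ x)) := hr.log fun x => (hrpos x).ne'
  have hp : ∀ i, ContDiff ℝ 1 (fun y => birr y i * ρ y) := fun i => (hbirr i).mul hρ
  set r : (Fin d → ℝ) → ℝ := fun x => ρ₁ x / ρ x with hrdef
  have hh : ContDiff ℝ 1 (fun x => r x * Real.log (r x)) := hr.mul hL
  have hF : ∀ i, ContDiff ℝ 1 (fun y => (r y * Real.log (r y)) * (birr y i * ρ y)) :=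
    fun i => hh.mul (hp i)
  have hFc : ∀ i, HasCompactSupport (fun y => (r y * Real.log (r y)) * (birr y i * ρ y)) := by
    intro i
    refine hbc.mono fun x hx => ?_
    contrapose! hx
    have : birr x = 0 := by simpa using hx
    simp [this]
  have key : ∀ x, (Real.log (ρ₁ x / ρ x) + 1) * (∑ i, pd i (fun y => birr y i * ρ₁ y) x)
      = ∑ i, pd i (fun y => (r y * Real.log (r y)) * (birr y i * ρ y)) x := by
    intro x
    have dr : DifferentiableAt ℝ r x := hr.differentiable one_ne_zero x
    have dh := hh.differentiable one_ne_zero x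
    have dL := hL.differentiable one_ne_zero x
    have e1 : ∀ i, pd i (fun y => birr y i * ρ₁ y) x
        = r x * pd i (fun y => birr y i * ρ y) x + birr x i * ρ x * pd i r x := by
      intro i
      rw [← pd_mul i r _ x dr ((hp i).differentiable one_ne_zero x)]
      congr 1
      funext y
      have := (hρpos y).ne'
      simp only [hrdef]
      field_simp
    have e3 : ∀ i, pd i (fun y => r y * Real.log (r y)) x
        = (Real.log (r x) + 1) * pd i r x := by
      intro i
      have hl : pd i (fun y => Real.log (r y)) x = (r x)⁻¹ * pd i r x := by
        unfold pd
        rw [fderiv.log dr (hrpos x).ne']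
        simp
      rw [pd_mul i r _ x dr dL, hl]
      have : r x ≠ 0 := (hrpos x).ne'
      field_simp
      ring
    have e2 : ∀ i, pd i (fun y => (r y * Real.log (r y)) * (birr y i * ρ y)) x
        = (r x * Real.log (r x)) * pd i (fun y => birr y i * ρ y) x
          + (Real.log (r x) + 1) * (birr x i * ρ x * pd i r x) := by
      intro i
      rw [pd_mul i _ _ x dh ((hp i).differentiable one_ne_zero x), e3]
      ring
    simp only [e1, e2, Finset.sum_add_distrib, ← Finset.mul_sum, hdiv x]
    simp [hrdef]
  simp only [key]
  rw [integral_finsetSum _ fun i _ => (integral_pd_zero i _ (hF i) (hFc i)).1]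
  exact Finset.sum_eq_zero fun i _ => (integral_pd_zero i _ (hF i) (hFc i)).2
end

section
/- Let d ≥ 1, let B, D, Π ∈ ℝ^{d×d} with D symmetric, Π symmetric positive definite, and define ρ : ℝ^d → ℝ by ρ(x) := exp(−xᵀΠx/2). Then ρ satisfies the stationary Fokker–Planck equation of the linear diffusion with drift b(x) = −Bx and constant diffusion matrix D, namely Σ_{i=1}^d ∂_i((Bx)_i ρ(x)) + Σ_{i,j=1}^d D_{ij} ∂_i∂_j ρ(x) = 0 for all x ∈ ℝ^d, if and only if there exists an antisymmetric matrix Q ∈ ℝ^{d×d} (Qᵀ = −Q) such that B = (D + Q)Π. -/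
open Matrix

theorem ou_pd_lin_mul {d : ℕ} (M P : Matrix (Fin d) (Fin d) ℝ) (hP : P.IsSymm)
    (ρ : (Fin d → ℝ) → ℝ)
    (hρ : ∀ x, ρ x = Real.exp (-(x ⬝ᵥ P.mulVec x) / 2)) (x : Fin d → ℝ) (i : Fin d) :
    pd i ρ x = -(P.mulVec x i) * ρ x ∧
    ∀ k, pd i (fun y => M.mulVec y k * ρ y) x
      = (M k i - M.mulVec x k * P.mulVec x i) * ρ x := by
  have hlin : ∀ (N : Matrix (Fin d) (Fin d) ℝ) (k : Fin d), HasFDerivAt (fun y => N.mulVec y k)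
      ((ContinuousLinearMap.proj k).comp (LinearMap.toContinuousLinearMap N.mulVecLin) :
        (Fin d → ℝ) →L[ℝ] ℝ) x := by
    intro N k
    exact ContinuousLinearMap.hasFDerivAt
      ((ContinuousLinearMap.proj k).comp (LinearMap.toContinuousLinearMap N.mulVecLin) :
        (Fin d → ℝ) →L[ℝ] ℝ)
  have hq : HasFDerivAt (fun y : Fin d → ℝ => ∑ k, y k * P.mulVec y k) _ x :=
    HasFDerivAt.fun_sum (u := Finset.univ)
      (fun k _ => (hasFDerivAt_apply (𝕜 := ℝ) k x).mul (hlin P k))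
  have hr := ((hq.const_mul (-(1/2 : ℝ)))).exp
  have hρ' : ρ = fun y => Real.exp (-(1/2) * ∑ k, y k * P.mulVec y k) := by
    funext y
    rw [hρ y]
    congr 1
    simp only [dotProduct]
    ring
  rw [← hρ'] at hr
  have hx : Real.exp (-(1/2) * ∑ k, x k * P.mulVec x k) = ρ x := by rw [hρ']
  rw [hx] at hr
  have h1 : pd i ρ x = -(P.mulVec x i) * ρ x := by
    rw [pd, hr.fderiv]
    have e : ∑ k, x k * P k i = P.mulVec x i := by
      simp only [mulVec, dotProduct]
      refine Finset.sum_congr rfl fun k _ => ?_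
      rw [hP.apply i k, mul_comm]
    simp [Finset.sum_add_distrib, Pi.single_apply, e]
    ring
  refine ⟨h1, fun k => ?_⟩
  have h2 := (hlin M k).mul hr
  rw [pd] at h1 ⊢
  rw [hr.fderiv] at h1
  erw [h2.fderiv]
  rw [ContinuousLinearMap.add_apply, ContinuousLinearMap.smul_apply, h1]
  simp
  ring

theorem ou_equation {d : ℕ} (Q D P : Matrix (Fin d) (Fin d) ℝ) (hP : P.IsSymm)
    (ρ : (Fin d → ℝ) → ℝ)
    (hρ : ∀ x, ρ x = Real.exp (-(x ⬝ᵥ P.mulVec x) / 2)) (x : Fin d → ℝ) :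
    (∑ i, pd i (fun y => ((D + Q) * P).mulVec y i * ρ y) x)
        + (∑ i, ∑ j, D i j * pd i (pd j ρ) x)
      = ((Q * P).trace - P.mulVec x ⬝ᵥ Q.mulVec (P.mulVec x)) * ρ x := by
  have hpd : ∀ j, pd j ρ = fun y => (-P).mulVec y j * ρ y := by
    intro j
    funext y
    rw [(ou_pd_lin_mul P P hP ρ hρ y j).1, neg_mulVec, Pi.neg_apply]
  have a1 : ∀ i, pd i (fun y => ((D + Q) * P).mulVec y i * ρ y) x = _ :=
    fun i => (ou_pd_lin_mul ((D + Q) * P) P hP ρ hρ x i).2 i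
  have a2 : ∀ i j, pd i (pd j ρ) x
      = ((-P) j i - (-P).mulVec x j * P.mulVec x i) * ρ x := fun i j => by
    rw [hpd j]
    exact (ou_pd_lin_mul (-P) P hP ρ hρ x i).2 j
  simp only [a1, a2]
  have b2 : ∀ i, ∑ j, D i j * (((-P) j i - (-P).mulVec x j * P.mulVec x i) * ρ x)
      = (-(D * P) i i + D.mulVec (P.mulVec x) i * P.mulVec x i) * ρ x := by
    intro i
    have e : D.mulVec (P.mulVec x) i = ∑ j, D i j * P.mulVec x j := rfl
    rw [mul_apply, e, Finset.sum_mul, ← Finset.sum_neg_distrib,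
      ← Finset.sum_add_distrib, Finset.sum_mul]
    refine Finset.sum_congr rfl fun j _ => ?_
    rw [neg_mulVec, Pi.neg_apply, neg_apply]
    ring
  simp only [b2]
  rw [trace, dotProduct, ← Finset.sum_sub_distrib, Finset.sum_mul, ← Finset.sum_add_distrib]
  refine Finset.sum_congr rfl fun i _ => ?_
  rw [add_mul, add_mulVec, ← mulVec_mulVec, ← mulVec_mulVec]
  simp only [Matrix.add_apply, Pi.add_apply, diag_apply]
  ring

theorem ou_antisymm_iff {d : ℕ} (Q : Matrix (Fin d) (Fin d) ℝ) :
    Qᵀ = -Q ↔ ∀ y, y ⬝ᵥ Q.mulVec y = 0 := by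
  constructor
  · intro h y
    have : y ⬝ᵥ Q.mulVec y = y ⬝ᵥ Qᵀ.mulVec y := by
      rw [mulVec_transpose, dotProduct_mulVec, dotProduct_comm]
    rw [h, neg_mulVec, dotProduct_neg] at this
    linarith
  · intro h
    ext i j
    have h1 := h (Pi.single i 1)
    have h2 := h (Pi.single j 1)
    have h3 := h (Pi.single i 1 + Pi.single j 1)
    simp [mulVec_add] at h1 h2 h3
    simp
    linarith

/-- **Helmholtz decomposition for the Ornstein–Uhlenbeck process.** The centred Gaussian
density `ρ(x) = exp(-xᵀΠx/2)` with symmetric positive definite precision matrix `Π`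
satisfies the stationary Fokker–Planck equation of the linear diffusion with drift
`b(x) = -Bx` and constant symmetric diffusion matrix `D` iff `B = (D + Q)Π` for some
antisymmetric matrix `Q`. -/
theorem ou_helmholtz_decomposition (d : ℕ) (hd : 1 ≤ d)
    (B D P : Matrix (Fin d) (Fin d) ℝ)
    (hD : D.IsSymm) (hP : P.PosDef)
    (ρ : (Fin d → ℝ) → ℝ)
    (hρ : ∀ x, ρ x = Real.exp (-(x ⬝ᵥ P.mulVec x) / 2)) :
    (∀ x, (∑ i, pd i (fun y => B.mulVec y i * ρ y) x)
        + (∑ i, ∑ j, D i j * pd i (pd j ρ) x) = 0)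
    ↔ ∃ Q : Matrix (Fin d) (Fin d) ℝ, Qᵀ = -Q ∧ B = (D + Q) * P := by
  have hPs : P.IsSymm := by
    have := hP.isHermitian
    rwa [IsHermitian, conjTranspose_eq_transpose_of_trivial] at this
  have hu : IsUnit P.det := hP.det_pos.ne'.isUnit
  have hpos : ∀ x, ρ x ≠ 0 := fun x => by rw [hρ]; exact (Real.exp_pos _).ne'
  constructor
  · intro h
    have hB : B = (D + (B * P⁻¹ - D)) * P := by
      rw [add_sub_cancel, nonsing_inv_mul_cancel_right _ _ hu]
    generalize B * P⁻¹ - D = Q at hB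
    subst hB
    refine ⟨Q, (ou_antisymm_iff Q).2 fun y => ?_, rfl⟩
    have k : ∀ x, (Q * P).trace - P.mulVec x ⬝ᵥ Q.mulVec (P.mulVec x) = 0 := fun x => by
      have := h x
      rw [ou_equation Q D P hPs ρ hρ x] at this
      exact (mul_eq_zero.1 this).resolve_right (hpos x)
    have k0 := k 0
    have ky := k (P⁻¹.mulVec y)
    rw [mulVec_mulVec, mul_nonsing_inv _ hu, one_mulVec] at ky
    simp at k0
    rw [k0] at ky
    linarith
  · rintro ⟨Q, hQ, rfl⟩ x
    rw [ou_equation Q D P hPs ρ hρ x, (ou_antisymm_iff Q).1 hQ]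
    have : (Q * P).trace = -(Q * P).trace := by
      conv_lhs => rw [← trace_transpose, transpose_mul, hQ, hPs.eq, mul_neg, trace_neg, trace_mul_comm]
    have t : (Q * P).trace = 0 := by linarith
    rw [t]
    simp
end
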